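/- Let 0 < d < 1 and let m be a nonnegative integer. Then Σ_{k=0}^∞ [(d)_k (2d-1)_k (1+k)_m] / [(2d)_k (2)_k (2+k)_m] = [Γ(1-d)Γ(2-2d)Γ(2d) / (Γ(3-2d)Γ(d))] · (2-2d)_m/(3-2d)_m + [(1-2d)/(2-2d)] · [Γ(1-d)/Γ(2-d)] · (2-2d)_m (1)_m / ((3-2d)_m (2-d)_m). -/

import Mathlib

open Real MeasureTheory

/-- Pochhammer symbol `(a)_k = a (a+1) ⋯ (a+k-1)` for real `a`. -/
noncomputable def poch (a : ℝ) (k : ℕ) : ℝ := (ascPochhammer ℝ k).eval a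

/-- Gaussian hypergeometric function `₂F₁(a,b;c;z)`. -/
noncomputable def hyp2F1 (a b c z : ℝ) : ℝ :=
  ∑' k : ℕ, (poch a k * poch b k) / poch c k * z ^ k / (Nat.factorial k)

/-- Generalized hypergeometric function `₃F₂(a₁,a₂,a₃;b₁,b₂;z)`. -/
noncomputable def hyp3F2 (a₁ a₂ a₃ b₁ b₂ z : ℝ) : ℝ :=
  ∑' k : ℕ, (poch a₁ k * poch a₂ k * poch a₃ k) / (poch b₁ k * poch b₂ k) * z ^ k /
    (Nat.factorial k)

/-- Generalized hypergeometric function `₄F₃(a₁,a₂,a₃,a₄;b₁,b₂,b₃;z)`. -/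
noncomputable def hyp4F3 (a₁ a₂ a₃ a₄ b₁ b₂ b₃ z : ℝ) : ℝ :=
  ∑' k : ℕ, (poch a₁ k * poch a₂ k * poch a₃ k * poch a₄ k) /
    (poch b₁ k * poch b₂ k * poch b₃ k) * z ^ k / (Nat.factorial k)

/-!
Since `(b)_k / (b+1)_k = b / (b+k)` and `(1+k)_m / (2+k)_m = (1+k) / (1+k+m)`, a partial fraction
decomposition in `k` writes the summand as a combination of the terms of `₂F₁(a, b; b+1; 1)` and
`₂F₁(a, m+1; m+2; 1)`, both evaluated by Gauss's summation theorem
`₂F₁(a, b; c; 1) = Γ(c) Γ(c-a-b) / (Γ(c-a) Γ(c-b))`. The latter comes from the contiguous relation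
`(c-a-b) F(c) = (c-a) (c-b) / c · F(c+1)`, a telescoping sum: iterating it, `F(c+n) → 1` and Euler's
limit formula turns the accumulated Pochhammer quotient into Gamma functions.
-/

open Filter Asymptotics Topology
open scoped Nat

section Pochhammer

variable {s : ℝ}

lemma ne_neg_natCast_of_pos (hs : 0 < s) (n : ℕ) : s ≠ -n := by
  have : (0 : ℝ) ≤ n := n.cast_nonneg
  linarith

lemma ne_intCast_of_abs_lt_one (hs : |s| < 1) (n : ℤ) (hn : n ≠ 0) : s ≠ n := by
  rintro rfl
  exact hn (Int.abs_lt_one_iff.1 (by exact_mod_cast hs))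

lemma add_natCast_ne_zero (hs : ∀ n : ℕ, s ≠ -n) (n : ℕ) : s + n ≠ 0 :=
  fun h => hs n (eq_neg_of_add_eq_zero_left h)

lemma add_natCast_ne_neg_natCast (hs : ∀ n : ℕ, s ≠ -n) (m n : ℕ) : s + m ≠ -n := fun h =>
  hs (m + n) (by push_cast; linarith)

@[simp]
lemma poch_zero (s : ℝ) : poch s 0 = 1 := by simp [poch]

lemma poch_succ (s : ℝ) (n : ℕ) : poch s (n + 1) = poch s n * (s + n) :=
  ascPochhammer_succ_eval n s

@[simp]
lemma poch_one (n : ℕ) : poch 1 n = n ! := ascPochhammer_eval_one ℝ n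

lemma poch_pos (hs : 0 < s) (n : ℕ) : 0 < poch s n := ascPochhammer_pos n s hs

lemma poch_eq_zero_iff {n : ℕ} : poch s n = 0 ↔ ∃ k < n, (k : ℝ) = -s :=
  ascPochhammer_eval_eq_zero_iff n s

lemma poch_ne_zero (hs : ∀ n : ℕ, s ≠ -n) (n : ℕ) : poch s n ≠ 0 := fun h => by
  obtain ⟨k, -, hk⟩ := poch_eq_zero_iff.1 h
  exact hs k (by rw [hk, neg_neg])

lemma poch_eq_prod_range (s : ℝ) (n : ℕ) : poch s n = ∏ j ∈ Finset.range n, (s + j) := by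
  induction n with
  | zero => simp
  | succ n ih => rw [poch_succ, ih, Finset.prod_range_succ]

lemma poch_mul_add (s : ℝ) (n : ℕ) : poch s n * (s + n) = s * poch (s + 1) n := by
  induction n with
  | zero => simp
  | succ n ih =>
    rw [poch_succ, ih, poch_succ]
    push_cast
    ring

lemma poch_div_poch_add_one (hs : ∀ n : ℕ, s ≠ -n) (n : ℕ) :
    poch s n / poch (s + 1) n = s / (s + n) := by
  have hs' : poch (s + 1) n ≠ 0 :=
    poch_ne_zero (by simpa using add_natCast_ne_neg_natCast hs 1) n
  rw [div_eq_div_iff hs' (add_natCast_ne_zero hs n), poch_mul_add]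

lemma Gamma_add_natCast (hs : ∀ n : ℕ, s ≠ -n) (n : ℕ) :
    Gamma (s + n) = Gamma s * poch s n := by
  induction n with
  | zero => simp
  | succ n ih =>
    rw [poch_succ, ← mul_assoc, ← ih, Nat.cast_succ, ← add_assoc,
      Gamma_add_one (add_natCast_ne_zero hs n), mul_comm]

lemma poch_le_poch {t : ℝ} (hs : 0 < s) (hst : s ≤ t) (n : ℕ) : poch s n ≤ poch t n := by
  rw [poch_eq_prod_range, poch_eq_prod_range]
  gcongr with j

lemma tendsto_poch_atTop {n : ℕ} (hn : n ≠ 0) : Tendsto (fun s => poch s n) atTop atTop := by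
  refine Polynomial.tendsto_atTop_of_leadingCoeff_nonneg _ ?_ ?_
  · rwa [← Polynomial.natDegree_pos_iff_degree_pos, ascPochhammer_natDegree, pos_iff_ne_zero]
  · rw [(monic_ascPochhammer ℝ n).leadingCoeff]
    exact zero_le_one

lemma GammaSeq_eq_div_poch (s : ℝ) (n : ℕ) : GammaSeq s n = n ^ s * n ! / poch s (n + 1) := by
  rw [GammaSeq, poch_eq_prod_range]

lemma isBigO_poch_succ (s : ℝ) :
    (fun n : ℕ => poch s (n + 1)) =O[atTop] fun n : ℕ => (n : ℝ) ^ s * n ! := by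
  by_cases hs : ∀ n : ℕ, s ≠ -n
  · have h_inv : (fun n => (GammaSeq s n)⁻¹) =O[atTop] fun _ => (1 : ℝ) :=
      ((GammaSeq_tendsto_Gamma s).inv₀ (Gamma_ne_zero hs)).isBigO_one ℝ
    refine ((isBigO_refl (fun n : ℕ => (n : ℝ) ^ s * n !) atTop).mul h_inv).congr' ?_
      (.of_forall fun n => mul_one _)
    filter_upwards [eventually_gt_atTop 0] with n hn
    rw [GammaSeq_eq_div_poch, inv_div, mul_div_cancel₀ _ (by positivity)]
  · push Not at hs
    obtain ⟨k, hk⟩ := hs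
    refine (isBigO_zero _ _).congr' ?_ .rfl
    filter_upwards [eventually_ge_atTop k] with n hn
    exact (poch_eq_zero_iff.2 ⟨k, by lia, by simp [hk]⟩).symm

lemma isBigO_inv_poch_succ (s : ℝ) :
    (fun n : ℕ => (poch s (n + 1))⁻¹) =O[atTop] fun n : ℕ => ((n : ℝ) ^ s * n !)⁻¹ := by
  refine ((isBigO_refl (fun n : ℕ => ((n : ℝ) ^ s * n !)⁻¹) atTop).mul
    ((GammaSeq_tendsto_Gamma s).isBigO_one ℝ)).congr' ?_ (.of_forall fun n => mul_one _)
  filter_upwards [eventually_gt_atTop 0] with n hn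
  rw [GammaSeq_eq_div_poch, div_eq_mul_inv, inv_mul_cancel_left₀ (by positivity)]

lemma tendsto_poch_mul_div_poch_mul {a b c e : ℝ} (ha : ∀ n : ℕ, a ≠ -n) (hb : ∀ n : ℕ, b ≠ -n)
    (h : a + b = c + e) :
    Tendsto (fun n => poch a n * poch b n / (poch c n * poch e n)) atTop
      (𝓝 (Gamma c * Gamma e / (Gamma a * Gamma b))) := by
  rw [← tendsto_add_atTop_iff_nat 1]
  refine (((GammaSeq_tendsto_Gamma c).mul (GammaSeq_tendsto_Gamma e)).div
    ((GammaSeq_tendsto_Gamma a).mul (GammaSeq_tendsto_Gamma b))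
    (mul_ne_zero (Gamma_ne_zero ha) (Gamma_ne_zero hb))).congr' ?_
  filter_upwards [eventually_gt_atTop 0] with n hn
  have hn' : (0 : ℝ) < n := by exact_mod_cast hn
  have h_pow : (n : ℝ) ^ a * (n : ℝ) ^ b = (n : ℝ) ^ c * (n : ℝ) ^ e := by
    rw [← rpow_add hn', ← rpow_add hn', h]
  have h_scale : (n : ℝ) ^ a * n ! * ((n : ℝ) ^ b * n !) ≠ 0 := by positivity
  have h_scale_eq : (n : ℝ) ^ c * n ! * ((n : ℝ) ^ e * n !) =
      (n : ℝ) ^ a * n ! * ((n : ℝ) ^ b * n !) := by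
    linear_combination -(n ! : ℝ) ^ 2 * h_pow
  simp only [Pi.div_apply, GammaSeq_eq_div_poch, div_mul_div_comm]
  rw [h_scale_eq, div_div_div_cancel_left' _ _ h_scale]

end Pochhammer

section Gauss

/-- The `k`-th term of Gauss's series `₂F₁(a, b; c; 1)`. -/
noncomputable def gaussTerm (a b c : ℝ) (k : ℕ) : ℝ := poch a k * poch b k / poch c k / k !

variable {a b c : ℝ}

lemma gaussTerm_succ (a b c : ℝ) (k : ℕ) :
    gaussTerm a b c (k + 1) = gaussTerm a b c k * ((a + k) * (b + k) / ((c + k) * (k + 1))) := by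
  simp only [gaussTerm, poch_succ, Nat.factorial_succ]
  push_cast
  rw [div_div, div_div, div_mul_div_comm]
  congr 1 <;> ring

lemma gaussTerm_add_one_right (a b : ℝ) (hc : ∀ n : ℕ, c ≠ -n) (k : ℕ) :
    gaussTerm a b (c + 1) k = gaussTerm a b c k * (c / (c + k)) := by
  rw [← poch_div_poch_add_one hc, gaussTerm, gaussTerm]
  have := poch_ne_zero hc k
  field_simp

lemma isBigO_gaussTerm_succ (a b c : ℝ) :
    (fun n => gaussTerm a b c (n + 1)) =O[atTop] fun n : ℕ => (n : ℝ) ^ (a + b - c - 1) := by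
  refine (((isBigO_poch_succ a).mul (isBigO_poch_succ b)).mul
    ((isBigO_inv_poch_succ c).mul (isBigO_inv_poch_succ 1))).congr' ?_ ?_
  · filter_upwards with n
    rw [gaussTerm, poch_one]
    field_simp
  · filter_upwards [eventually_gt_atTop 0] with n hn
    have hn' : (0 : ℝ) < n := by exact_mod_cast hn
    rw [rpow_sub hn', rpow_sub hn', rpow_add hn']
    field_simp

lemma summable_gaussTerm (h : a + b < c) : Summable (gaussTerm a b c) :=
  (summable_nat_add_iff 1).1 <|
    summable_of_isBigO_nat (summable_nat_rpow.2 (by linarith)) (isBigO_gaussTerm_succ a b c)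

lemma hasSum_gaussTerm (h : a + b < c) : HasSum (gaussTerm a b c) (hyp2F1 a b c 1) := by
  simpa only [hyp2F1, gaussTerm, one_pow, mul_one] using (summable_gaussTerm h).hasSum

lemma tendsto_natCast_mul_gaussTerm (h : a + b < c) :
    Tendsto (fun n : ℕ => n * gaussTerm a b c n) atTop (𝓝 0) := by
  rw [← tendsto_add_atTop_iff_nat 1]
  have h_succ : (fun n : ℕ => ((n + 1 : ℕ) : ℝ)) =O[atTop] fun n : ℕ => (n : ℝ) := by
    refine .of_bound 2 ?_
    filter_upwards [eventually_ge_atTop 1] with n hn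
    have hn' : (1 : ℝ) ≤ n := by exact_mod_cast hn
    rw [norm_natCast, norm_natCast, Nat.cast_succ]
    linarith
  have h_rpow : Tendsto (fun n : ℕ => (n : ℝ) * (n : ℝ) ^ (a + b - c - 1)) atTop (𝓝 0) := by
    refine ((tendsto_rpow_neg_atTop (sub_pos.2 h)).comp tendsto_natCast_atTop_atTop).congr' ?_
    filter_upwards [eventually_gt_atTop 0] with n hn
    have hn' : (n : ℝ) ≠ 0 := by exact_mod_cast hn.ne'
    rw [rpow_sub_one hn', mul_div_cancel₀ _ hn', Function.comp_apply, neg_sub]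
  exact (h_succ.mul (isBigO_gaussTerm_succ a b c)).trans_tendsto h_rpow

lemma gaussTerm_contiguous (a b : ℝ) (hc : ∀ n : ℕ, c ≠ -n) (k : ℕ) :
    (c - a - b) * gaussTerm a b c k - (c - a) * (c - b) / c * gaussTerm a b (c + 1) k =
      k * gaussTerm a b c k - (k + 1 : ℕ) * gaussTerm a b c (k + 1) := by
  have hc0 : c ≠ 0 := by simpa using hc 0
  have hck := add_natCast_ne_zero hc k
  rw [gaussTerm_succ, gaussTerm_add_one_right a b hc]
  push_cast
  field_simp
  ring

lemma hyp2F1_one_contiguous (hc : ∀ n : ℕ, c ≠ -n) (h : a + b < c) :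
    (c - a - b) * hyp2F1 a b c 1 = (c - a) * (c - b) / c * hyp2F1 a b (c + 1) 1 := by
  have h_sum := ((hasSum_gaussTerm h).mul_left (c - a - b)).sub
    ((hasSum_gaussTerm (h.trans (lt_add_one c))).mul_left ((c - a) * (c - b) / c))
  have h_telescope (n : ℕ) : ∑ k ∈ Finset.range n, ((c - a - b) * gaussTerm a b c k -
      (c - a) * (c - b) / c * gaussTerm a b (c + 1) k) = -(n * gaussTerm a b c n) := by
    simp only [gaussTerm_contiguous a b hc,
      Finset.sum_range_sub' fun k : ℕ => (k : ℝ) * gaussTerm a b c k,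
      Nat.cast_zero, zero_mul, zero_sub]
  have h_lim := h_sum.tendsto_sum_nat
  simp only [h_telescope] at h_lim
  exact sub_eq_zero.1 <| tendsto_nhds_unique h_lim <| by
    simpa using (tendsto_natCast_mul_gaussTerm h).neg

lemma hyp2F1_one_eq_poch_mul (hc : ∀ n : ℕ, c ≠ -n) (h : a + b < c) (n : ℕ) :
    hyp2F1 a b c 1 = poch (c - a) n * poch (c - b) n / (poch c n * poch (c - a - b) n) *
      hyp2F1 a b (c + n) 1 := by
  induction n with
  | zero => simp
  | succ n ih =>
    have hcn := add_natCast_ne_zero hc n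
    have habn : c - a - b + n ≠ 0 :=
      add_natCast_ne_zero (ne_neg_natCast_of_pos (by linarith)) n
    have h_step : hyp2F1 a b (c + n) 1 = (c - a + n) * (c - b + n) /
        ((c + n) * (c - a - b + n)) * hyp2F1 a b (c + (n + 1 : ℕ)) 1 := by
      have h_contig := hyp2F1_one_contiguous (a := a) (b := b) (add_natCast_ne_neg_natCast hc n)
        (h.trans_le (le_add_of_nonneg_right n.cast_nonneg))
      rw [Nat.cast_succ, ← add_assoc]
      field_simp at h_contig ⊢
      linear_combination h_contig
    rw [ih, h_step, ← mul_assoc, div_mul_div_comm]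
    simp only [poch_succ]
    congr 2 <;> ring

lemma norm_gaussTerm_le {c' : ℝ} (a b : ℝ) (hc : 0 < c) (hcc' : c ≤ c') (k : ℕ) :
    ‖gaussTerm a b c' k‖ ≤ ‖gaussTerm a b c k‖ := by
  have h_pos := poch_pos hc k
  have h_le := poch_le_poch hc hcc' k
  simp only [gaussTerm, norm_div, norm_of_nonneg h_pos.le, norm_of_nonneg (h_pos.le.trans h_le)]
  gcongr

lemma tendsto_gaussTerm_atTop (a b : ℝ) (k : ℕ) :
    Tendsto (fun c => gaussTerm a b c k) atTop (𝓝 (if k = 0 then 1 else 0)) := by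
  split_ifs with hk
  · simp [hk, gaussTerm]
  · simpa only [gaussTerm, zero_div] using
      ((tendsto_poch_atTop hk).const_div_atTop (poch a k * poch b k)).div_const (k ! : ℝ)

lemma tendsto_hyp2F1_one_atTop (a b : ℝ) : Tendsto (fun c => hyp2F1 a b c 1) atTop (𝓝 1) := by
  obtain ⟨c₀, hc₀⟩ := exists_gt (max 0 (a + b))
  obtain ⟨hc₀_pos, hc₀_gt⟩ := max_lt_iff.1 hc₀
  have h_tsum := tendsto_tsum_of_dominated_convergence (summable_gaussTerm hc₀_gt).norm
    (tendsto_gaussTerm_atTop a b) <| by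
      filter_upwards [eventually_ge_atTop c₀] with c hc using norm_gaussTerm_le a b hc₀_pos hc
  rw [tsum_ite_eq] at h_tsum
  refine h_tsum.congr' ?_
  filter_upwards [eventually_gt_atTop (a + b)] with c hc using (hasSum_gaussTerm hc).tsum_eq

theorem hyp2F1_one_eq_Gamma (hc : ∀ n : ℕ, c ≠ -n) (hca : ∀ n : ℕ, c - a ≠ -n)
    (hcb : ∀ n : ℕ, c - b ≠ -n) (h : a + b < c) :
    hyp2F1 a b c 1 = Gamma c * Gamma (c - a - b) / (Gamma (c - a) * Gamma (c - b)) := by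
  have h_shift : Tendsto (fun n : ℕ => hyp2F1 a b (c + n) 1) atTop (𝓝 1) :=
    (tendsto_hyp2F1_one_atTop a b).comp
      (tendsto_atTop_add_const_left _ c tendsto_natCast_atTop_atTop)
  have h_lim := (tendsto_poch_mul_div_poch_mul (c := c) (e := c - a - b) hca hcb
    (by ring)).mul h_shift
  rw [mul_one] at h_lim
  exact tendsto_nhds_unique (tendsto_const_nhds.congr (hyp2F1_one_eq_poch_mul hc h)) h_lim

end Gauss

section PartialFractions

variable {a b : ℝ}

lemma hasSum_gaussTerm_self_add_one (ha : a < 1) (hb : ∀ n : ℕ, b + 1 ≠ -n)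
    (hab : ∀ n : ℕ, 1 + b - a ≠ -n) :
    HasSum (gaussTerm a b (b + 1)) (Gamma (b + 1) * Gamma (1 - a) / Gamma (1 + b - a)) := by
  have h_gauss := hyp2F1_one_eq_Gamma (a := a) hb (by rwa [add_comm b]) (b := b)
    (by rw [add_sub_cancel_left]; exact ne_neg_natCast_of_pos one_pos) (by linarith)
  rw [show b + 1 - a - b = 1 - a by ring, show b + 1 - a = 1 + b - a by ring,
    add_sub_cancel_left, Gamma_one, mul_one] at h_gauss
  exact h_gauss ▸ hasSum_gaussTerm (by linarith)

lemma gaussTerm_self_add_one_mul_add (a : ℝ) (hb : ∀ n : ℕ, b + 1 ≠ -n) (k : ℕ) :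
    gaussTerm a b (b + 1) k * (b + k) = b * (poch a k / k !) := by
  have := poch_ne_zero hb k
  have h_shift := poch_mul_add b k
  rw [gaussTerm]
  field_simp
  linear_combination poch a k * h_shift

lemma poch_quotient_eq_gaussTerm_div (a b : ℝ) (m k : ℕ) :
    poch a k * poch b k * poch (1 + k) m / (poch (b + 1) k * poch 2 k * poch (2 + k) m) =
      gaussTerm a b (b + 1) k / (1 + k + m) := by
  have h_two : poch 2 k = k ! * (1 + k) := by
    simpa [one_add_one_eq_two] using (poch_mul_add 1 k).symm
  have h_ratio : poch (1 + k) m / poch (2 + k) m = (1 + k) / (1 + k + m) := by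
    rw [← poch_div_poch_add_one (ne_neg_natCast_of_pos (by positivity))]
    ring_nf
  have hk : (1 + k : ℝ) ≠ 0 := by positivity
  rw [mul_div_mul_comm, h_ratio, h_two, gaussTerm]
  field_simp

lemma poch_quotient_eq_sub (a : ℝ) (hb : ∀ n : ℕ, b + 1 ≠ -n) {m : ℕ} (hbm : 1 - b + m ≠ 0)
    (k : ℕ) :
    poch a k * poch b k * poch (1 + k) m / (poch (b + 1) k * poch 2 k * poch (2 + k) m) =
      (gaussTerm a b (b + 1) k - b / (m + 1) * gaussTerm a (m + 1) (m + 1 + 1) k) /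
        (1 - b + m) := by
  have h_b := gaussTerm_self_add_one_mul_add a hb k
  have h_m := gaussTerm_self_add_one_mul_add a (b := m + 1)
    (ne_neg_natCast_of_pos (by positivity)) k
  have hm : (m + 1 : ℝ) ≠ 0 := by positivity
  have hkm : (1 + k + m : ℝ) ≠ 0 := by positivity
  rw [poch_quotient_eq_gaussTerm_div]
  field_simp
  linear_combination b * h_m - (m + 1) * h_b

theorem pochhammer_series_sum_general (ha : a < 1) (hb : ∀ n : ℤ, n ≠ 0 → b ≠ n)
    (hab : ∀ n : ℕ, 1 + b - a ≠ -n) (m : ℕ) :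
    HasSum (fun k : ℕ => poch a k * poch b k * poch (1 + k) m /
        (poch (b + 1) k * poch 2 k * poch (2 + k) m))
      (Gamma (1 - a) * Gamma (1 - b) * Gamma (b + 1) / (Gamma (2 - b) * Gamma (1 + b - a)) *
          (poch (1 - b) m / poch (2 - b) m)
        + -b / (1 - b) * (Gamma (1 - a) / Gamma (2 - a)) *
          (poch (1 - b) m * poch 1 m / (poch (2 - b) m * poch (2 - a) m))) := by
  have hb_succ : ∀ n : ℕ, b + 1 ≠ -n := fun n h =>
    hb (-(n + 1)) (by lia) (by push_cast; linarith)
  have hb_sub : ∀ n : ℕ, 1 - b ≠ -n := fun n h => hb (n + 1) (by lia) (by push_cast; linarith)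
  have hb_ne : 1 - b ≠ 0 := by simpa using hb_sub 0
  have hbm : 1 - b + m ≠ 0 := add_natCast_ne_zero hb_sub m
  have ha_two : ∀ n : ℕ, 2 - a ≠ -n := ne_neg_natCast_of_pos (by linarith)
  have h_m := hasSum_gaussTerm_self_add_one (b := m + 1) ha (ne_neg_natCast_of_pos (by positivity))
    (ne_neg_natCast_of_pos (by linarith [m.cast_nonneg (α := ℝ)]))
  have h_sum := ((hasSum_gaussTerm_self_add_one ha hb_succ hab).sub
    (h_m.mul_left (b / (m + 1)))).div_const (1 - b + m)
  have h_Gamma_b : Gamma (2 - b) = (1 - b) * Gamma (1 - b) := by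
    rw [← Gamma_add_one hb_ne]
    ring_nf
  have h_ratio : poch (1 - b) m / poch (2 - b) m = (1 - b) / (1 - b + m) := by
    rw [← poch_div_poch_add_one hb_sub]
    ring_nf
  have h_Gamma_a : Gamma (1 + (m + 1) - a) = Gamma (2 - a) * poch (2 - a) m := by
    rw [← Gamma_add_natCast ha_two]
    ring_nf
  have h_Gamma_m : Gamma (m + 1 + 1) = (m + 1) * m ! := by
    rw [Gamma_add_one (by positivity), Gamma_nat_eq_factorial]
  simp only [poch_quotient_eq_sub a hb_succ hbm]
  convert! h_sum using 1
  have h_Gamma_b_ne := Gamma_ne_zero hb_sub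
  rw [mul_div_mul_comm (poch (1 - b) m), h_ratio, h_Gamma_b, h_Gamma_a, h_Gamma_m, poch_one]
  field_simp
  ring

end PartialFractions

theorem pochhammer_series_sum (d : ℝ) (hd0 : 0 < d) (hd1 : d < 1) (m : ℕ) :
    (∑' k : ℕ, (poch d k * poch (2 * d - 1) k * poch (1 + k) m) /
        (poch (2 * d) k * poch 2 k * poch (2 + k) m))
    = Real.Gamma (1 - d) * Real.Gamma (2 - 2 * d) * Real.Gamma (2 * d) /
        (Real.Gamma (3 - 2 * d) * Real.Gamma d) * (poch (2 - 2 * d) m / poch (3 - 2 * d) m)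
      + (1 - 2 * d) / (2 - 2 * d) * (Real.Gamma (1 - d) / Real.Gamma (2 - d)) *
          (poch (2 - 2 * d) m * poch 1 m / (poch (3 - 2 * d) m * poch (2 - d) m)) := by
  have h_sum := (pochhammer_series_sum_general (a := d) hd1
    (ne_intCast_of_abs_lt_one (s := 2 * d - 1) (abs_lt.2 ⟨by linarith, by linarith⟩))
    (ne_neg_natCast_of_pos (by linarith)) m).tsum_eq
  rwa [sub_add_cancel, neg_sub, show 1 - (2 * d - 1) = 2 - 2 * d by ring,
    show 2 - (2 * d - 1) = 3 - 2 * d by ring, show 1 + (2 * d - 1) - d = d by ring] at h_sum
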